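/- arXiv:1502.03811 — 2 statements merged into one kernel-verified Lean document; each statement's English description precedes it below -/
import Mathlib

section
/- Let d ≥ 2 and let g : ℕ → GL(d,ℝ) have bounded steps; for each n ∈ ℕ fix a singular value decomposition g(n) = k(n)·diag(α(n))·k'(n). Assume that for every index i ∈ Fin d with i ≠ 0, the sequence n ↦ log(α(n) 0) − log(α(n) i) is CLI. Then there exists B > 0 such that for all n, m ∈ ℕ and every index i ∈ Fin d with i ≠ 0, the (i,0) entry of the orthogonal matrix H := k(n)⁻¹·k(n+m) satisfies |H_{i,0}| · (α(n) 0 / α(n) i) ≤ B. -/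
open Matrix

/-- The operator norm of a `d × d` real matrix acting on Euclidean `ℝ^d`. -/
noncomputable def opNorm {d : ℕ} (M : Matrix (Fin d) (Fin d) ℝ) : ℝ :=
  ‖LinearMap.toContinuousLinearMap (Matrix.toEuclideanLin M)‖

/-- `IsSVD g k α k'` means `g = k · diag(α) · k'` is a singular value decomposition:
`k, k'` are orthogonal and `α` is positive and nonincreasing. -/
def IsSVD {d : ℕ} (g k : Matrix (Fin d) (Fin d) ℝ) (α : Fin d → ℝ)
    (k' : Matrix (Fin d) (Fin d) ℝ) : Prop :=
  k * kᵀ = 1 ∧ k' * k'ᵀ = 1 ∧ (∀ i, 0 < α i) ∧ Antitone α ∧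
    g = k * Matrix.diagonal α * k'

/-- A sequence of matrices has bounded steps if consecutive quotients are uniformly
bounded (in operator norm) together with their inverses. -/
noncomputable def HasBoundedSteps {d : ℕ} (g : ℕ → Matrix (Fin d) (Fin d) ℝ) : Prop :=
  ∃ r₀ : ℝ, 1 ≤ r₀ ∧ ∀ n : ℕ,
    opNorm ((g n)⁻¹ * g (n + 1)) ≤ r₀ ∧ opNorm ((g (n + 1))⁻¹ * g n) ≤ r₀

/-- A real sequence has coarsely linear increments (is CLI). -/
def IsCLI (x : ℕ → ℝ) : Prop :=
  ∃ κ κ' κ'' κ''' : ℝ, 0 < κ ∧ 0 < κ' ∧ 0 < κ'' ∧ 0 < κ''' ∧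
    ∀ n m : ℕ, κ * m - κ' ≤ x (n + m) - x n ∧ x (n + m) - x n ≤ κ'' * m + κ'''

open scoped Matrix.Norms.L2Operator in
lemma aux_entry {d : ℕ} (A : Matrix (Fin d) (Fin d) ℝ) (i j : Fin d) :
    |A i j| ≤ ‖A‖ := by
  have h1 := Matrix.l2_opNorm_mulVec A (EuclideanSpace.single j (1 : ℝ))
  have h2 := PiLp.norm_apply_le (WithLp.toLp 2 (A *ᵥ (EuclideanSpace.single j (1 : ℝ)).ofLp)) i
  simp only [EuclideanSpace.norm_single, norm_one, mul_one] at h1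
  have h3 : (A *ᵥ (EuclideanSpace.single j (1 : ℝ)).ofLp) i = A i j := by
    simp [Matrix.mulVec_single]
  simp only [h3, Real.norm_eq_abs] at h2
  exact h2.trans h1

open scoped Matrix.Norms.L2Operator in
lemma aux_orth_mem {d : ℕ} {k : Matrix (Fin d) (Fin d) ℝ} (h : k * kᵀ = 1) :
    k ∈ unitary (Matrix (Fin d) (Fin d) ℝ) := by
  have h' : kᵀ * k = 1 := mul_eq_one_comm.mp h
  rw [Unitary.mem_iff]
  simp only [Matrix.star_eq_conjTranspose, Matrix.conjTranspose_eq_transpose_of_trivial]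
  exact ⟨h', h⟩

open scoped Matrix.Norms.L2Operator in
lemma aux_step {d : ℕ} {g₁ k₁ k₁' g₂ k₂ k₂' : Matrix (Fin d) (Fin d) ℝ} {α₁ α₂ : Fin d → ℝ}
    (h₁ : IsSVD g₁ k₁ α₁ k₁') (h₂ : IsSVD g₂ k₂ α₂ k₂') {r : ℝ}
    (hr : opNorm (g₁⁻¹ * g₂) ≤ r) (i j : Fin d) :
    |(k₁ᵀ * k₂) i j| * α₂ j ≤ r * α₁ i := by
  obtain ⟨a1, b1, c1, -, e1⟩ := h₁
  obtain ⟨a2, b2, c2, -, e2⟩ := h₂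
  have a1' : k₁ᵀ * k₁ = 1 := mul_eq_one_comm.mp a1
  have hdet : IsUnit g₁.det := by
    have u1 : IsUnit k₁.det := Matrix.isUnit_det_of_right_inverse a1
    have u2 : IsUnit k₁'.det := Matrix.isUnit_det_of_right_inverse b1
    have u3 : IsUnit (Matrix.diagonal α₁).det := by
      rw [Matrix.det_diagonal, isUnit_iff_ne_zero]
      exact Finset.prod_ne_zero_iff.mpr fun i _ => (c1 i).ne'
    rw [e1, Matrix.det_mul, Matrix.det_mul]
    exact (u1.mul u3).mul u2
  set S := g₁⁻¹ * g₂ with hS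
  have hgS : g₁ * S = g₂ := by
    rw [hS, ← Matrix.mul_assoc, Matrix.mul_nonsing_inv _ hdet, Matrix.one_mul]
  have key : k₁ᵀ * k₂ * Matrix.diagonal α₂ = Matrix.diagonal α₁ * (k₁' * S * k₂'ᵀ) := by
    calc k₁ᵀ * k₂ * Matrix.diagonal α₂
        = k₁ᵀ * (k₂ * Matrix.diagonal α₂ * k₂') * k₂'ᵀ := by
          simp only [Matrix.mul_assoc, b2, Matrix.mul_one]
      _ = k₁ᵀ * (g₁ * S) * k₂'ᵀ := by rw [← e2, hgS]
      _ = (k₁ᵀ * k₁) * (Matrix.diagonal α₁ * (k₁' * S * k₂'ᵀ)) := by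
          rw [e1]; simp only [Matrix.mul_assoc]
      _ = _ := by rw [a1', Matrix.one_mul]
  have hn : ‖k₁' * S * k₂'ᵀ‖ ≤ r := by
    have m2 : k₂'ᵀ ∈ unitary (Matrix (Fin d) (Fin d) ℝ) :=
      aux_orth_mem (by rw [Matrix.transpose_transpose]; exact mul_eq_one_comm.mp b2)
    rw [CStarRing.norm_mul_mem_unitary _ m2, CStarRing.norm_mem_unitary_mul _ (aux_orth_mem b1)]
    exact hr
  have he := congrFun (congrFun key i) j
  rw [Matrix.mul_diagonal, Matrix.diagonal_mul] at he
  have h5 := (aux_entry (k₁' * S * k₂'ᵀ) i j).trans hn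
  calc |(k₁ᵀ * k₂) i j| * α₂ j = |(k₁ᵀ * k₂) i j * α₂ j| := by
        rw [abs_mul, abs_of_pos (c2 j)]
    _ = α₁ i * |(k₁' * S * k₂'ᵀ) i j| := by rw [he, abs_mul, abs_of_pos (c1 i)]
    _ ≤ α₁ i * r := mul_le_mul_of_nonneg_left h5 (c1 i).le
    _ = r * α₁ i := mul_comm _ _

/-- Truncation of a vector to the indices `≥ i`. -/
noncomputable def truncVec {d : ℕ} (i : Fin d) (v : Fin d → ℝ) : Fin d → ℝ :=
  fun a => if i ≤ a then v a else 0

/-- Euclidean norm of the truncated vector. -/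
noncomputable def truncNorm {d : ℕ} (i : Fin d) (v : Fin d → ℝ) : ℝ :=
  ‖WithLp.toLp 2 (truncVec i v)‖

lemma truncNorm_le {d : ℕ} (i : Fin d) (v : Fin d → ℝ) :
    truncNorm i v ≤ ‖WithLp.toLp 2 v‖ := by
  unfold truncNorm
  rw [EuclideanSpace.norm_eq, EuclideanSpace.norm_eq]
  apply Real.sqrt_le_sqrt
  apply Finset.sum_le_sum
  intro a _
  simp only [truncVec]
  split_ifs
  · exact le_rfl
  · simp only [norm_zero]; nlinarith [sq_nonneg ‖v a‖]

lemma norm_le_sum_abs {d : ℕ} (v : Fin d → ℝ) :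
    ‖WithLp.toLp 2 v‖ ≤ ∑ a, |v a| := by
  rw [EuclideanSpace.norm_eq]
  apply Real.sqrt_le_iff.mpr
  refine ⟨Finset.sum_nonneg fun _ _ => abs_nonneg _, ?_⟩
  simp only [Real.norm_eq_abs]
  exact Finset.sum_sq_le_sq_sum_of_nonneg fun _ _ => abs_nonneg _

open scoped Matrix.Norms.L2Operator in
lemma trunc_step {d : ℕ} {H : Matrix (Fin d) (Fin d) ℝ} (hH : H * Hᵀ = 1) (i : Fin d)
    (w : Fin d → ℝ) (D : ℝ) (hD0 : 0 ≤ D)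
    (hD : ∀ a b, i ≤ a → b < i → |H a b| * |w b| ≤ D) :
    truncNorm i (H *ᵥ w) ≤ truncNorm i w + d * (d * D) := by
  have hsplit : truncVec i (H *ᵥ w) =
      truncVec i (H *ᵥ truncVec i w) + truncVec i (H *ᵥ (w - truncVec i w)) := by
    rw [Matrix.mulVec_sub]
    funext a
    simp only [truncVec, Pi.add_apply, Pi.sub_apply]
    split_ifs <;> ring
  have h1 : ‖WithLp.toLp 2 (truncVec i (H *ᵥ truncVec i w))‖ ≤ truncNorm i w := by
    refine (truncNorm_le i _).trans ?_
    have h := Matrix.l2_opNorm_mulVec H (WithLp.toLp 2 (truncVec i w))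
    have hn : ‖H‖ ≤ 1 := by
      have := CStarRing.norm_mul_mem_unitary (1 : Matrix (Fin d) (Fin d) ℝ) (aux_orth_mem hH)
      rw [one_mul] at this
      rw [this]
      have : Nonempty (Fin d) := ⟨i⟩
      have : Nontrivial (Matrix (Fin d) (Fin d) ℝ) := inferInstance
      exact (CStarRing.norm_one).le
    refine h.trans ?_
    exact mul_le_of_le_one_left (norm_nonneg _) hn
  have h2 : ‖WithLp.toLp 2 (truncVec i (H *ᵥ (w - truncVec i w)))‖ ≤ d * (d * D) := by
    refine (norm_le_sum_abs _).trans ?_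
    have hb : ∀ a ∈ (Finset.univ : Finset (Fin d)),
        |truncVec i (H *ᵥ (w - truncVec i w)) a| ≤ d * D := by
      intro a _
      simp only [truncVec]
      split_ifs with hia
      · simp only [Matrix.mulVec, dotProduct]
        refine (Finset.abs_sum_le_sum_abs _ _).trans ?_
        have : ∀ b ∈ (Finset.univ : Finset (Fin d)),
            |H a b * (w - truncVec i w) b| ≤ D := by
          intro b _
          simp only [Pi.sub_apply, truncVec]
          split_ifs with hib
          · simpa using hD0
          · rw [sub_zero, abs_mul]
            exact hD a b hia (not_le.mp hib)
        simpa using Finset.sum_le_card_nsmul _ _ _ this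
      · rw [abs_zero]; positivity
    simpa using Finset.sum_le_card_nsmul _ _ _ hb
  unfold truncNorm at *
  rw [hsplit, WithLp.toLp_add]
  exact (norm_add_le _ _).trans (add_le_add h1 h2)

/-- Summation along the sequence. -/
lemma telescoping_bound (T E : ℕ → ℝ) (C ρ : ℝ) (hC : 0 ≤ C) (hρ : 0 ≤ ρ) (hρ1 : ρ < 1)
    (N : ℕ) (hT : T N = 0) (hstep : ∀ n, n < N → T n ≤ T (n + 1) + E n)
    (hE : ∀ n m, E (n + m) ≤ C * ρ ^ m * E n) (hE0 : ∀ n, 0 ≤ E n) (n m : ℕ) (hnm : n + m = N) :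
    T n ≤ C / (1 - ρ) * E n := by
  have h1 : ∀ m n, n + m = N → T n ≤ ∑ j ∈ Finset.range m, E (n + j) := by
    intro m
    induction m with
    | zero => intro n hn; simp at hn; simp [hn, hT]
    | succ m ih =>
      intro n hn
      have := ih (n + 1) (by omega)
      rw [Finset.sum_range_succ']
      have h2 := hstep n (by omega)
      have h3 : ∀ j, n + 1 + j = n + (j + 1) := fun j => by omega
      simp only [h3] at this
      simp only [add_zero]
      linarith
  refine (h1 m n hnm).trans ?_
  calc ∑ j ∈ Finset.range m, E (n + j) ≤ ∑ j ∈ Finset.range m, C * ρ ^ j * E n :=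
        Finset.sum_le_sum fun j _ => hE n j
    _ = C * (∑ j ∈ Finset.range m, ρ ^ j) * E n := by
        rw [Finset.mul_sum, Finset.sum_mul]
    _ ≤ C * (1 - ρ)⁻¹ * E n := by
        have : ∑ j ∈ Finset.range m, ρ ^ j ≤ (1 - ρ)⁻¹ := by
          rw [← tsum_geometric_of_lt_one hρ hρ1]
          exact (summable_geometric_of_lt_one hρ hρ1).sum_le_tsum _ (fun _ _ => by positivity)
        exact mul_le_mul_of_nonneg_right (mul_le_mul_of_nonneg_left this hC) (hE0 n)
    _ = _ := by rw [div_eq_mul_inv]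

lemma abs_entry_le_truncNorm {d : ℕ} (i : Fin d) (v : Fin d → ℝ) : |v i| ≤ truncNorm i v := by
  have h2 := PiLp.norm_apply_le (WithLp.toLp 2 (truncVec i v)) i
  simpa [truncVec, truncNorm] using h2

lemma orth_entry_le {d : ℕ} {H : Matrix (Fin d) (Fin d) ℝ} (hH : H * Hᵀ = 1) (i j : Fin d) :
    |H i j| ≤ 1 := by
  have := entry_norm_bound_of_unitary (𝕜 := ℝ) (aux_orth_mem hH) i j
  simpa using this

theorem core (d : ℕ) (z : Fin d) (hz : ∀ i, z ≤ i) (k : ℕ → Matrix (Fin d) (Fin d) ℝ)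
    (α : ℕ → Fin d → ℝ) (hk : ∀ n, k n * (k n)ᵀ = 1) (hpos : ∀ n i, 0 < α n i)
    (hanti : ∀ n, Antitone (α n)) (r : ℝ) (hr : 1 ≤ r)
    (hs1 : ∀ n i j, |((k n)ᵀ * k (n + 1)) i j| * α (n + 1) j ≤ r * α n i)
    (hs2 : ∀ n i j, |((k n)ᵀ * k (n + 1)) i j| * α n i ≤ r * α (n + 1) j)
    (hcli : ∀ i, i ≠ z → IsCLI fun n => Real.log (α n z) - Real.log (α n i)) :
    ∀ i, ∃ B : ℝ, 0 < B ∧ ∀ n m, |((k n)ᵀ * k (n + m)) i z| ≤ B * (α n i / α n z) := by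
  have hk' : ∀ n, (k n)ᵀ * k n = 1 := fun n => mul_eq_one_comm.mp (hk n)
  have horth : ∀ n m, ((k n)ᵀ * k m) * ((k n)ᵀ * k m)ᵀ = 1 := by
    intro n m
    rw [Matrix.transpose_mul, Matrix.transpose_transpose, Matrix.mul_assoc,
      ← Matrix.mul_assoc (k m), hk, Matrix.one_mul, hk']
  have hdpos : (0 : ℝ) < d := by
    have : 0 < d := Fin.pos z
    exact_mod_cast this
  -- comparison of the top singular values
  have htop : ∀ n, α n z ≤ d * r * α (n + 1) z := by
    intro n
    have hrow := congrFun (congrFun (horth n (n + 1)) z) z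
    rw [Matrix.mul_apply, Matrix.one_apply_eq] at hrow
    simp only [Matrix.transpose_apply] at hrow
    have h1 : ∀ b ∈ (Finset.univ : Finset (Fin d)),
        (((k n)ᵀ * k (n + 1)) z b * ((k n)ᵀ * k (n + 1)) z b) * α n z ≤ r * α (n + 1) z := by
      intro b _
      have e1 := orth_entry_le (horth n (n + 1)) z b
      have e2 := hs2 n z b
      have e3 : r * α (n + 1) b ≤ r * α (n + 1) z :=
        mul_le_mul_of_nonneg_left (hanti _ (hz b)) (by linarith)
      refine le_trans ?_ (e2.trans e3)
      apply mul_le_mul_of_nonneg_right _ (hpos n z).le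
      rw [← abs_mul_abs_self]
      exact mul_le_of_le_one_left (abs_nonneg _) e1
    have h2 := Finset.sum_le_card_nsmul _ _ _ h1
    rw [← Finset.sum_mul, hrow, one_mul] at h2
    simp only [Finset.card_univ, Fintype.card_fin, nsmul_eq_mul] at h2
    linarith
  intro i
  induction i using WellFoundedLT.induction with
  | ind i ih =>
  by_cases hiz : i = z
  · subst hiz
    refine ⟨1, one_pos, fun n m => ?_⟩
    rw [div_self (hpos n i).ne', mul_one]
    exact orth_entry_le (horth _ _) _ _
  -- a common constant for the smaller indices
  obtain ⟨B, hB0, hB⟩ : ∃ B : ℝ, 0 < B ∧ ∀ b, b < i → ∀ n m,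
      |((k n)ᵀ * k (n + m)) b z| ≤ B * (α n b / α n z) := by
    have : ∀ b, ∃ B : ℝ, 0 < B ∧ (b < i → ∀ n m,
        |((k n)ᵀ * k (n + m)) b z| ≤ B * (α n b / α n z)) := by
      intro b
      by_cases hb : b < i
      · obtain ⟨B, h0, h1⟩ := ih b hb
        exact ⟨B, h0, fun _ => h1⟩
      · exact ⟨1, one_pos, fun h => absurd h hb⟩
    choose Bf hBf0 hBf using this
    refine ⟨∑ b, Bf b, Finset.sum_pos (fun b _ => hBf0 b) ⟨z, Finset.mem_univ _⟩, ?_⟩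
    intro b hb n m
    refine (hBf b hb n m).trans ?_
    apply mul_le_mul_of_nonneg_right _ (div_pos (hpos _ _) (hpos _ _)).le
    exact Finset.single_le_sum (f := Bf) (fun b _ => (hBf0 b).le) (Finset.mem_univ b)
  obtain ⟨κ, κ', _, _, hκ, _, _, _, hcl⟩ := hcli i hiz
  set D : ℝ := r * B * (d * r) with hDdef
  have hD0 : 0 < D := by positivity
  set Ef : ℕ → ℝ := fun n => d * (d * (D * (α n i / α n z))) with hEf
  have hE0 : ∀ n, 0 ≤ Ef n := fun n => by
    have := hpos n i; have := hpos n z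
    simp only [hEf]; positivity
  have hE : ∀ n m, Ef (n + m) ≤ Real.exp κ' * Real.exp (-κ) ^ m * Ef n := by
    intro n m
    have h := (hcl n m).1
    have hexp : ∀ n, α n i / α n z = Real.exp (-(Real.log (α n z) - Real.log (α n i))) := by
      intro n
      rw [neg_sub, Real.exp_sub, Real.exp_log (hpos _ _), Real.exp_log (hpos _ _)]
    have h2 : α (n + m) i / α (n + m) z ≤
        Real.exp κ' * Real.exp (-κ) ^ m * (α n i / α n z) := by
      rw [hexp, hexp, ← Real.exp_nat_mul, ← Real.exp_add, ← Real.exp_add]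
      apply Real.exp_le_exp.mpr
      linarith
    simp only [hEf]
    calc d * (d * (D * (α (n + m) i / α (n + m) z)))
        ≤ d * (d * (D * (Real.exp κ' * Real.exp (-κ) ^ m * (α n i / α n z)))) := by gcongr
      _ = _ := by ring
  have hρ1 : Real.exp (-κ) < 1 := by rw [← Real.exp_zero]; exact Real.exp_lt_exp.mpr (by linarith)
  refine ⟨Real.exp κ' / (1 - Real.exp (-κ)) * (d * (d * D)), ?_, ?_⟩
  · have : 0 < 1 - Real.exp (-κ) := by linarith
    positivity
  intro n m
  -- the vectors
  set v : ℕ → Fin d → ℝ := fun j a => ((k j)ᵀ * k (n + m)) a z with hv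
  have hfin := telescoping_bound (fun j => truncNorm i (v j)) Ef (Real.exp κ') (Real.exp (-κ))
    (Real.exp_pos _).le (Real.exp_pos _).le hρ1 (n + m) ?_ ?_ hE hE0 n m rfl
  · refine (abs_entry_le_truncNorm i (v n)).trans (hfin.trans (le_of_eq ?_))
    simp only [hEf]; ring
  · have : truncVec i (v (n + m)) = 0 := by
      funext a
      simp only [truncVec, hv, hk', Pi.zero_apply]
      split_ifs with hia
      · rw [Matrix.one_apply_ne]
        rintro rfl
        exact hiz (le_antisymm hia (hz i))
      · rfl
    simp only [truncNorm, this, WithLp.toLp_zero, norm_zero]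
  · intro j hj
    have hvj : v j = ((k j)ᵀ * k (j + 1)) *ᵥ v (j + 1) := by
      have : (k j)ᵀ * k (n + m) = ((k j)ᵀ * k (j + 1)) * ((k (j + 1))ᵀ * k (n + m)) := by
        rw [Matrix.mul_assoc, ← Matrix.mul_assoc (k (j + 1)), hk, Matrix.one_mul]
      funext a
      simp only [hv]
      rw [this, Matrix.mul_apply]
      rfl
    show truncNorm i (v j) ≤ truncNorm i (v (j + 1)) + Ef j
    rw [hvj]
    have pz := hpos j z
    have pi := hpos j i
    refine trunc_step (horth j (j + 1)) i (v (j + 1)) (D * (α j i / α j z)) (by positivity) ?_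
    intro a b hia hbi
    have q1 := hs1 j a b
    have q2 : |v (j + 1) b| ≤ B * (α (j + 1) b / α (j + 1) z) := by
      have := hB b hbi (j + 1) (n + m - (j + 1))
      rwa [show j + 1 + (n + m - (j + 1)) = n + m by omega] at this
    have q3 := htop j
    have q4 : α j a ≤ α j i := hanti j hia
    have p1 := hpos (j + 1) z
    have p2 := hpos (j + 1) b
    calc |((k j)ᵀ * k (j + 1)) a b| * |v (j + 1) b|
        ≤ |((k j)ᵀ * k (j + 1)) a b| * (B * (α (j + 1) b / α (j + 1) z)) := by gcongr
      _ = (|((k j)ᵀ * k (j + 1)) a b| * α (j + 1) b) * (B / α (j + 1) z) := by ring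
      _ ≤ (r * α j i) * (B / α (j + 1) z) := by
          apply mul_le_mul_of_nonneg_right _ (by positivity)
          exact q1.trans (mul_le_mul_of_nonneg_left q4 (by linarith))
      _ ≤ D * (α j i / α j z) := by
          rw [hDdef, mul_div_assoc', mul_div_assoc', div_le_div_iff₀ p1 pz]
          have : 0 ≤ r * α j i * B := by positivity
          nlinarith [mul_le_mul_of_nonneg_left q3 this]

/-- If, along a bounded-step sequence `g(n) = k(n)·diag(α(n))·k'(n)`, the top singular
value gaps `log(α(n) 0) − log(α(n) i)` are CLI, then the entries
`(k(n)⁻¹ k(n+m))_{i,0} · α(n) 0/α(n) i` are uniformly bounded. -/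
theorem stmt12 (d : ℕ) (hd : 2 ≤ d) (g : ℕ → Matrix (Fin d) (Fin d) ℝ)
    (hbd : HasBoundedSteps g)
    (k : ℕ → Matrix (Fin d) (Fin d) ℝ) (α : ℕ → Fin d → ℝ)
    (k' : ℕ → Matrix (Fin d) (Fin d) ℝ)
    (hsvd : ∀ n : ℕ, IsSVD (g n) (k n) (α n) (k' n))
    (hcli : ∀ i : Fin d, i ≠ ⟨0, by omega⟩ →
      IsCLI fun n => Real.log (α n ⟨0, by omega⟩) - Real.log (α n i)) :
    ∃ B : ℝ, 0 < B ∧ ∀ (n m : ℕ) (i : Fin d), i ≠ ⟨0, by omega⟩ →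
      |((k n)⁻¹ * k (n + m)) i ⟨0, by omega⟩| * (α n ⟨0, by omega⟩ / α n i) ≤ B := by
  obtain ⟨r, hr, hb⟩ := hbd
  have hinv : ∀ n, (k n)⁻¹ = (k n)ᵀ := fun n => Matrix.inv_eq_right_inv (hsvd n).1
  have hc := core d ⟨0, by omega⟩ (fun i => Nat.zero_le _) k α (fun n => (hsvd n).1)
    (fun n => (hsvd n).2.2.1) (fun n => (hsvd n).2.2.2.1) r hr
    (fun n i j => aux_step (hsvd n) (hsvd (n + 1)) (hb n).1 i j)
    (fun n i j => by
      have h := aux_step (hsvd (n + 1)) (hsvd n) (hb n).2 j i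
      have e : ((k (n + 1))ᵀ * k n) j i = ((k n)ᵀ * k (n + 1)) i j := by
        rw [← Matrix.transpose_apply ((k (n + 1))ᵀ * k n), Matrix.transpose_mul,
          Matrix.transpose_transpose]
      rwa [e] at h) hcli
  choose Bf hBf0 hBf using hc
  refine ⟨∑ b, Bf b, Finset.sum_pos (fun b _ => hBf0 b) ⟨⟨0, by omega⟩, Finset.mem_univ _⟩, ?_⟩
  intro n m i _
  have p0 := (hsvd n).2.2.1 ⟨0, by omega⟩
  have pi := (hsvd n).2.2.1 i
  rw [hinv]
  have h := hBf i n m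
  have hle : Bf i ≤ ∑ b, Bf b :=
    Finset.single_le_sum (f := Bf) (fun b _ => (hBf0 b).le) (Finset.mem_univ i)
  refine le_trans (mul_le_mul_of_nonneg_right h (div_pos p0 pi).le) ?_
  rw [mul_assoc, div_mul_div_cancel₀ p0.ne', div_self pi.ne', mul_one]
  exact hle
end

section
/- Let d ≥ 2 and let g : ℕ → GL(d,ℝ) have bounded steps; for each n ∈ ℕ fix a singular value decomposition g(n) = k(n)·diag(α(n))·k'(n). Assume that for every index i ∈ Fin d with i ≠ 0, the sequence n ↦ log(α(n) 0) − log(α(n) i) is CLI. Then there exist δ ∈ (0,1] and N ∈ ℕ such that for all n ≥ N and all m ∈ ℕ: sin∠( w , e₁ ) ≤ 1 − δ, where w is the vector obtained by applying the matrix (diag(α(n)))⁻¹ · (k(n)⁻¹·k(n+m)) · diag(α(n)) to e₁. -/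
open Matrix

/-- The action of a `d × d` real matrix on Euclidean `ℝ^d`. -/
noncomputable def appE {d : ℕ} (M : Matrix (Fin d) (Fin d) ℝ)
    (v : EuclideanSpace ℝ (Fin d)) : EuclideanSpace ℝ (Fin d) :=
  Matrix.toEuclideanLin M v

/-- The sine of the angle between two vectors of Euclidean `ℝ^d`. -/
noncomputable def sinAngle {d : ℕ} (u v : EuclideanSpace ℝ (Fin d)) : ℝ :=
  Real.sin (InnerProductGeometry.angle u v)

/-- The first standard basis vector of Euclidean `ℝ^d`. -/
noncomputable def e1 {d : ℕ} (h : 0 < d) : EuclideanSpace ℝ (Fin d) :=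
  EuclideanSpace.single ⟨0, h⟩ 1

structure Valid {d : ℕ} (z : Fin d) (A ρ C0 : ℝ) (b p : ℕ → Fin d → ℝ) (i : Fin d) : Prop where
  bpos : ∀ s l, 0 < b s l
  banti : ∀ s, Antitone (b s)
  bz : ∀ s, b s z = 1
  bdec : ∀ l, l ≠ z → ∀ s m, b (s + m) l ≤ A * ρ ^ m * b s l
  p0 : ∀ s l, 0 ≤ p s l
  p1 : ∀ s l, p s l ≤ 1
  pini : ∀ l, l < i → p 0 l = 0
  iz : i ≠ z
  prec : ∀ s l, p (s + 1) l ≤ p s l +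
    C0 * ∑ l' ∈ Finset.univ.filter (fun l' => l < l'), b s l' / b (s + 1) l * p s l'

theorem conv_sum (ρ : ℝ) (h1 : ρ < 1) (Q Z : ℕ → ℝ) (hZ0 : Z 0 = 0)
    (hZ : ∀ s, Z (s + 1) = ρ * Z s + Q s) (S : ℕ) :
    ∑ s ∈ Finset.range S, Z s + Z S / (1 - ρ) = (∑ s ∈ Finset.range S, Q s) / (1 - ρ) := by
  have : 1 - ρ ≠ 0 := by linarith
  induction S with
  | zero => simp [hZ0]
  | succ S ih =>
    rw [Finset.sum_range_succ, Finset.sum_range_succ, hZ, add_div (∑ x ∈ Finset.range S, Q x), ← ih]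
    field_simp
    ring

noncomputable def convZ (ρ : ℝ) (Q : ℕ → ℝ) : ℕ → ℝ
  | 0 => 0
  | s + 1 => ρ * convZ ρ Q s + Q s

theorem sums_bd {d : ℕ} (z : Fin d) (hz : ∀ l, z ≤ l) (A ρ C0 : ℝ) (hA : 0 ≤ A) (h0 : 0 ≤ ρ)
    (h1 : ρ < 1) (hC0 : 0 ≤ C0) (n : ℕ) :
    ∃ D : ℝ, 0 ≤ D ∧ ∀ b p i, Valid z A ρ C0 b p i → ∀ l : Fin d, l ≠ z → d ≤ l + n → ∀ S,
      ∑ s ∈ Finset.range S, b s l * p s l ≤ D * b 0 i := by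
  have hr : 0 < 1 - ρ := by linarith
  induction n with
  | zero => exact ⟨0, le_rfl, fun b p i _ l _ h => absurd h (by have := l.2; omega)⟩
  | succ n ih =>
    obtain ⟨D, hD, ih⟩ := ih
    refine ⟨A / (1 - ρ) + A * C0 * (d * D / (1 - ρ)), by positivity, ?_⟩
    intro b p i V l hlz hl S
    have hbi := V.bpos 0 i
    by_cases hil : i ≤ l
    · have h2 : ∑ s ∈ Finset.range S, b s l * p s l ≤ ∑ s ∈ Finset.range S, A * b 0 i * ρ ^ s := by
        apply Finset.sum_le_sum
        intro s _
        have e1 := V.bdec i V.iz 0 s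
        rw [zero_add] at e1
        have e2 := V.banti s hil
        have e3 := mul_le_of_le_one_right (V.bpos s l).le (V.p1 s l)
        nlinarith
      have h3 : ∑ s ∈ Finset.range S, ρ ^ s ≤ 1 / (1 - ρ) := by
        rw [geom_sum_eq h1.ne, ← neg_div_neg_eq]
        rw [neg_sub, neg_sub]
        gcongr
        have := pow_nonneg h0 S
        linarith
      rw [← Finset.mul_sum] at h2
      have h4 : A * b 0 i * ∑ s ∈ Finset.range S, ρ ^ s ≤ A * b 0 i * (1 / (1 - ρ)) := by gcongr
      have h5 : 0 ≤ A * C0 * (d * D / (1 - ρ)) * b 0 i := by positivity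
      calc _ ≤ _ := h2
        _ ≤ _ := h4
        _ ≤ A / (1 - ρ) * b 0 i + A * C0 * (d * D / (1 - ρ)) * b 0 i := by
            have : A * b 0 i * (1 / (1 - ρ)) = A / (1 - ρ) * b 0 i := by ring
            linarith
        _ = _ := by ring
    · have hil := not_le.1 hil
      set Q : ℕ → ℝ := fun s => ∑ l' ∈ Finset.univ.filter (fun l' => l < l'), b s l' * p s l' with hQ
      have hQ0 : ∀ s, 0 ≤ Q s := fun s => Finset.sum_nonneg fun l' _ =>
        mul_nonneg (V.bpos s l').le (V.p0 s l')
      have hQs : ∑ s ∈ Finset.range S, Q s ≤ d * D * b 0 i := by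
        rw [hQ, Finset.sum_comm]
        calc _ ≤ ∑ l' ∈ Finset.univ.filter (fun l' => l < l'), D * b 0 i := by
              apply Finset.sum_le_sum
              intro l' hl'
              simp only [Finset.mem_filter, Finset.mem_univ, true_and] at hl'
              apply ih b p i V l'
              · exact ((hz l).trans_lt hl').ne'
              · have : (l:ℕ) < l' := hl'
                omega
          _ ≤ ∑ l' : Fin d, D * b 0 i := by
              apply Finset.sum_le_sum_of_subset_of_nonneg (Finset.filter_subset _ _)
              intros; positivity
          _ = _ := by simp; ring
      set Z := convZ ρ Q with hZ
      have hZs : ∀ s, Z (s + 1) = ρ * Z s + Q s := fun s => rfl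
      have hZ0 : Z 0 = 0 := rfl
      have hZn : ∀ s, 0 ≤ Z s := by
        intro s
        induction s with
        | zero => exact hZ0.ge
        | succ s ih => rw [hZs]; have := hQ0 s; positivity
      have key : ∀ s e, b (s + e) l * p s l ≤ A * C0 * ρ ^ e * Z s := by
        intro s
        induction s with
        | zero => intro e; rw [V.pini l hil, hZ0]; simp
        | succ s ihs =>
          intro e
          have e1 := ihs (e + 1)
          have e2 := V.bdec l hlz (s + 1) e
          have e3 := V.prec s l
          have e4 : ∑ l' ∈ Finset.univ.filter (fun l' => l < l'), b s l' / b (s + 1) l * p s l'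
              = Q s / b (s + 1) l := by
            rw [hQ, Finset.sum_div]
            exact Finset.sum_congr rfl fun _ _ => by ring
          rw [e4] at e3
          have hb1 := V.bpos (s + 1) l
          have hb2 := V.bpos (s + 1 + e) l
          have hq := hQ0 s
          calc b (s + 1 + e) l * p (s + 1) l
              ≤ b (s + 1 + e) l * (p s l + C0 * (Q s / b (s + 1) l)) := by gcongr
            _ = b (s + (e + 1)) l * p s l + b (s + 1 + e) l * (C0 * (Q s / b (s + 1) l)) := by
                rw [show s + (e + 1) = s + 1 + e by ring]; ring
            _ ≤ A * C0 * ρ ^ (e + 1) * Z s +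
                 (A * ρ ^ e * b (s + 1) l) * (C0 * (Q s / b (s + 1) l)) := by gcongr
            _ = _ := by rw [hZs]; field_simp; ring
      have h6 := conv_sum ρ h1 Q Z hZ0 hZs S
      have h7 : 0 ≤ Z S / (1 - ρ) := div_nonneg (hZn S) hr.le
      calc ∑ s ∈ Finset.range S, b s l * p s l ≤ ∑ s ∈ Finset.range S, A * C0 * Z s := by
            apply Finset.sum_le_sum
            intro s _
            simpa using key s 0
        _ = A * C0 * ∑ s ∈ Finset.range S, Z s := by rw [Finset.mul_sum]
        _ ≤ A * C0 * ((∑ s ∈ Finset.range S, Q s) / (1 - ρ)) := by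
            gcongr; linarith
        _ ≤ A * C0 * (d * D * b 0 i / (1 - ρ)) := by gcongr
        _ ≤ A * C0 * (d * D * b 0 i / (1 - ρ)) + A / (1 - ρ) * b 0 i := by
            have : 0 ≤ A / (1 - ρ) * b 0 i := by positivity
            linarith
        _ = _ := by ring

theorem scalar_bd {d : ℕ} (z : Fin d) (hz : ∀ l, z ≤ l) (A ρ C0 : ℝ) (hA : 0 ≤ A) (h0 : 0 ≤ ρ)
    (h1 : ρ < 1) (hC0 : 0 ≤ C0) :
    ∃ C : ℝ, 0 ≤ C ∧ ∀ b p i, Valid z A ρ C0 b p i → ∀ s, p s z ≤ C * b 0 i := by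
  obtain ⟨D, hD, H⟩ := sums_bd z hz A ρ C0 hA h0 h1 hC0 d
  refine ⟨C0 * (d * D), by positivity, ?_⟩
  intro b p i V s
  have hbi := V.bpos 0 i
  have h2 : ∀ s, p s z ≤ C0 * ∑ t ∈ Finset.range s,
      ∑ l' ∈ Finset.univ.filter (fun l' => z < l'), b t l' * p t l' := by
    intro s
    induction s with
    | zero => rw [V.pini z (lt_of_le_of_ne (hz i) V.iz.symm)]; simp
    | succ s ih =>
      have := V.prec s z
      simp only [V.bz, div_one] at this
      rw [Finset.sum_range_succ, mul_add]
      linarith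
  refine (h2 s).trans ?_
  rw [mul_assoc]
  gcongr
  rw [Finset.sum_comm]
  calc _ ≤ ∑ l' ∈ Finset.univ.filter (fun l' => z < l'), D * b 0 i := by
        apply Finset.sum_le_sum
        intro l' hl'
        simp only [Finset.mem_filter, Finset.mem_univ, true_and] at hl'
        exact H b p i V l' hl'.ne' (by omega) s
    _ ≤ ∑ l' : Fin d, D * b 0 i := by
        apply Finset.sum_le_sum_of_subset_of_nonneg (Finset.filter_subset _ _)
        intros; positivity
    _ = _ := by simp; ring

theorem appE_apply {d : ℕ} (M : Matrix (Fin d) (Fin d) ℝ) (v : EuclideanSpace ℝ (Fin d))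
    (i : Fin d) : appE M v i = ∑ j, M i j * v j := by
  simp [appE, Matrix.toLpLin_apply, Matrix.mulVec, dotProduct]

theorem appE_mul {d : ℕ} (M N : Matrix (Fin d) (Fin d) ℝ) (v : EuclideanSpace ℝ (Fin d)) :
    appE (M * N) v = appE M (appE N v) := by
  simp [appE, Matrix.toLpLin_apply]

theorem appE_single {d : ℕ} (M : Matrix (Fin d) (Fin d) ℝ) (i l : Fin d) :
    appE M (EuclideanSpace.single l 1) i = M i l := by
  simp [appE_apply]

theorem norm_appE_orth {d : ℕ} (U : Matrix (Fin d) (Fin d) ℝ) (hU : Uᵀ * U = 1)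
    (v : EuclideanSpace ℝ (Fin d)) : ‖appE U v‖ = ‖v‖ := by
  have h : ‖appE U v‖ ^ 2 = ‖v‖ ^ 2 := by
    rw [EuclideanSpace.real_norm_sq_eq, EuclideanSpace.real_norm_sq_eq]
    have e1 : ∑ i, (appE U v) i ^ 2 = (U *ᵥ v.ofLp) ⬝ᵥ (U *ᵥ v.ofLp) := by
      simp [dotProduct, appE, Matrix.toLpLin_apply, sq]
    rw [e1, Matrix.dotProduct_mulVec, Matrix.vecMul_mulVec, hU]
    simp [dotProduct, sq]
  exact (sq_eq_sq₀ (norm_nonneg _) (norm_nonneg _)).1 h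

theorem norm_appE_le {d : ℕ} (M : Matrix (Fin d) (Fin d) ℝ) (v : EuclideanSpace ℝ (Fin d)) :
    ‖appE M v‖ ≤ opNorm M * ‖v‖ :=
  (LinearMap.toContinuousLinearMap (Matrix.toEuclideanLin M)).le_opNorm v

theorem entry_le {d : ℕ} (K M L : Matrix (Fin d) (Fin d) ℝ) (hK : Kᵀ * K = 1) (hL : Lᵀ * L = 1)
    (i l : Fin d) : |(K * M * L) i l| ≤ opNorm M := by
  rw [← appE_single (K * M * L), ← Real.norm_eq_abs]
  refine (PiLp.norm_apply_le _ _).trans ?_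
  rw [appE_mul, appE_mul, norm_appE_orth K hK]
  refine (norm_appE_le _ _).trans ?_
  rw [norm_appE_orth L hL]
  simp

/-- truncation to the first coordinates -/
noncomputable def trunc {d : ℕ} (l : Fin d) (v : EuclideanSpace ℝ (Fin d)) :
    EuclideanSpace ℝ (Fin d) := WithLp.toLp 2 fun q => if q ≤ l then v q else 0

theorem norm_trunc_le {d : ℕ} (l : Fin d) (v : EuclideanSpace ℝ (Fin d)) : ‖trunc l v‖ ≤ ‖v‖ := by
  rw [← sq_le_sq₀ (norm_nonneg _) (norm_nonneg _), EuclideanSpace.real_norm_sq_eq,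
    EuclideanSpace.real_norm_sq_eq]
  apply Finset.sum_le_sum
  intro i _
  simp only [trunc]
  split_ifs
  · rfl
  · simp [sq_nonneg]

theorem norm_le_sum {d : ℕ} (v : EuclideanSpace ℝ (Fin d)) (e : ℝ) (h : ∀ i, |v i| ≤ e) :
    ‖v‖ ≤ d * e := by
  have : v = ∑ i, EuclideanSpace.single i (v i) := by
    ext j; simp [Pi.single_apply]
  rw [this]
  refine (norm_sum_le _ _).trans ?_
  refine (Finset.sum_le_sum (g := fun _ => e) fun i _ => ?_).trans ?_
  · simpa using h i
  · simp

theorem trunc_step_s13 {d : ℕ} (H : Matrix (Fin d) (Fin d) ℝ) (hH : H * Hᵀ = 1) (l : Fin d)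
    (ε : Fin d → ℝ) (hε : ∀ l', l < l' → ∀ q, q ≤ l → |H l' q| ≤ ε l')
    (X : EuclideanSpace ℝ (Fin d)) :
    ‖trunc l (appE Hᵀ X)‖ ≤ ‖trunc l X‖ +
      d * ∑ l' ∈ Finset.univ.filter (fun l' => l < l'), ε l' * ‖trunc l' X‖ := by
  have e : trunc l (appE Hᵀ X) = trunc l (appE Hᵀ (trunc l X)) +
      ∑ l' ∈ Finset.univ.filter (fun l' => l < l'),
        X l' • trunc l (appE Hᵀ (EuclideanSpace.single l' 1)) := by
    ext q
    simp only [trunc, PiLp.add_apply, WithLp.ofLp_sum, Finset.sum_apply, PiLp.smul_apply,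
      appE_single, smul_eq_mul]
    by_cases hq : q ≤ l
    · simp only [hq, if_true, appE_apply, Matrix.transpose_apply]
      rw [Finset.sum_filter, ← Finset.sum_add_distrib]
      apply Finset.sum_congr rfl
      intro j _
      by_cases hj : j ≤ l
      · simp [hj, not_lt.2 hj]
      · simp [hj, not_le.1 hj, mul_comm]
    · simp [hq]
  rw [e]
  refine (norm_add_le _ _).trans (add_le_add ?_ ?_)
  · refine (norm_trunc_le _ _).trans ?_
    rw [norm_appE_orth]
    simpa using hH
  · rw [Finset.mul_sum]
    refine (norm_sum_le _ _).trans (Finset.sum_le_sum fun l' hl' => ?_)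
    simp only [Finset.mem_filter, Finset.mem_univ, true_and] at hl'
    have hε0 : 0 ≤ ε l' := (abs_nonneg _).trans (hε l' hl' l le_rfl)
    have h1 : ‖trunc l (appE Hᵀ (EuclideanSpace.single l' 1))‖ ≤ d * ε l' := by
      apply norm_le_sum
      intro q
      simp only [trunc, appE_single, Matrix.transpose_apply]
      split_ifs with h
      · exact hε l' hl' q h
      · simpa using hε0
    have h2 : ‖X l'‖ ≤ ‖trunc l' X‖ := by
      have := PiLp.norm_apply_le (trunc l' X) l'
      simpa [trunc] using this
    rw [norm_smul]
    calc _ ≤ ‖trunc l' X‖ * (d * ε l') := by gcongr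
      _ = _ := by ring

theorem svd_rel {d : ℕ} {g h k₁ k₂ k₁' k₂' : Matrix (Fin d) (Fin d) ℝ} {a b : Fin d → ℝ}
    (hg : IsSVD g k₁ a k₁') (hh : IsSVD h k₂ b k₂') :
    (k₁ᵀ * k₂) * Matrix.diagonal b = Matrix.diagonal a * (k₁' * (g⁻¹ * h) * k₂'ᵀ) := by
  obtain ⟨o1, o1', apos, -, e1⟩ := hg
  obtain ⟨o2, o2', bpos, -, e2⟩ := hh
  have t1 : k₁ᵀ * k₁ = 1 := mul_eq_one_comm.1 o1
  have hdet : IsUnit g.det := by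
    rw [e1, Matrix.det_mul, Matrix.det_mul, Matrix.det_diagonal]
    have u1 : IsUnit k₁.det := Matrix.isUnit_det_of_right_inverse o1
    have u2 : IsUnit k₁'.det := Matrix.isUnit_det_of_right_inverse o1'
    exact (u1.mul (Finset.prod_pos fun i _ => apos i).ne'.isUnit).mul u2
  have h1 : g * (g⁻¹ * h) = h := by
    rw [← Matrix.mul_assoc, Matrix.mul_nonsing_inv _ hdet, Matrix.one_mul]
  calc k₁ᵀ * k₂ * Matrix.diagonal b = k₁ᵀ * (k₂ * Matrix.diagonal b * k₂') * k₂'ᵀ := by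
        simp only [Matrix.mul_assoc, o2', Matrix.mul_one]
    _ = k₁ᵀ * (g * (g⁻¹ * h)) * k₂'ᵀ := by rw [← e2, h1]
    _ = k₁ᵀ * ((k₁ * Matrix.diagonal a * k₁') * (g⁻¹ * h)) * k₂'ᵀ := by
        conv_lhs => rw [show g * (g⁻¹ * h) = (k₁ * Matrix.diagonal a * k₁') * (g⁻¹ * h) by
          rw [← e1]]
    _ = (k₁ᵀ * k₁) * (Matrix.diagonal a * (k₁' * (g⁻¹ * h) * k₂'ᵀ)) := by
        simp only [Matrix.mul_assoc]
    _ = _ := by rw [t1, Matrix.one_mul]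

theorem orth_entry {d : ℕ} {k₁ k₂ : Matrix (Fin d) (Fin d) ℝ} (h1 : k₁ * k₁ᵀ = 1)
    (h2 : k₂ * k₂ᵀ = 1) (i l : Fin d) : |(k₁ᵀ * k₂) i l| ≤ 1 := by
  rw [← appE_single (k₁ᵀ * k₂), ← Real.norm_eq_abs]
  refine (PiLp.norm_apply_le _ _).trans ?_
  rw [appE_mul, norm_appE_orth _ (by simpa using h1), norm_appE_orth _ (mul_eq_one_comm.1 h2)]
  simp

theorem step_entry {d : ℕ} (z : Fin d) (hz : ∀ l, z ≤ l)
    {g h k₁ k₂ k₁' k₂' : Matrix (Fin d) (Fin d) ℝ} {a b : Fin d → ℝ}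
    (hg : IsSVD g k₁ a k₁') (hh : IsSVD h k₂ b k₂') (r : ℝ)
    (hr1 : opNorm (g⁻¹ * h) ≤ r) (hr2 : opNorm (h⁻¹ * g) ≤ r) (i q : Fin d) :
    |(k₁ᵀ * k₂) i q| ≤ d * r ^ 2 * ((a i / a z) / (b q / b z)) := by
  have R1 := svd_rel hg hh
  have R2 := svd_rel hh hg
  obtain ⟨o1, o1', apos, aanti, e1⟩ := hg
  obtain ⟨o2, o2', bpos, banti, e2⟩ := hh
  have E1 := entry_le k₁' (g⁻¹ * h) k₂'ᵀ (mul_eq_one_comm.1 o1') (by simpa using o2') i q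
  have hr : 0 ≤ r := (norm_nonneg _).trans hr1
  have F1 : (k₁ᵀ * k₂) i q * b q = a i * (k₁' * (g⁻¹ * h) * k₂'ᵀ) i q := by
    have := congrFun (congrFun R1 i) q
    rwa [Matrix.mul_diagonal, Matrix.diagonal_mul] at this
  have F2 : a z ≤ d * r * b z := by
    have t1 : (k₁ᵀ * k₂) * (k₂ᵀ * k₁) = 1 := by
      rw [Matrix.mul_assoc, ← Matrix.mul_assoc k₂, o2, Matrix.one_mul, mul_eq_one_comm.1 o1]
    have : Matrix.diagonal a = (k₁ᵀ * k₂) * (Matrix.diagonal b * (k₂' * (h⁻¹ * g) * k₁'ᵀ)) := by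
      rw [← R2, ← Matrix.mul_assoc, t1, Matrix.one_mul]
    have h3 := congrFun (congrFun this z) z
    rw [Matrix.diagonal_apply_eq, Matrix.mul_apply] at h3
    rw [h3]
    calc _ ≤ ∑ j : Fin d, r * b z := by
          apply Finset.sum_le_sum
          intro j _
          rw [Matrix.diagonal_mul]
          have E2 := (entry_le k₂' (h⁻¹ * g) k₁'ᵀ (mul_eq_one_comm.1 o2') (by simpa using o1') j z).trans hr2
          have E3 := orth_entry o1 o2 z j
          refine (le_abs_self _).trans ?_
          rw [abs_mul, abs_mul, abs_of_pos (bpos j)]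
          have := banti (hz j)
          have hb := (bpos j).le
          have hb' := (bpos z).le
          calc _ ≤ 1 * (b z * r) := by gcongr
            _ = _ := by ring
      _ = _ := by simp; ring
  have hbq := bpos q
  have hbz := bpos z
  have haz := apos z
  have hai := apos i
  have G : |(k₁ᵀ * k₂) i q| * b q ≤ a i * r := by
    rw [← abs_of_pos hbq, ← abs_mul, F1, abs_mul, abs_of_pos hai]
    gcongr
    exact E1.trans hr1
  have : (d:ℝ) * r ^ 2 * ((a i / a z) / (b q / b z)) = a i * r / b q * (d * r * b z / a z) := by
    field_simp
  rw [this]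
  have h5 : 1 ≤ d * r * b z / a z := by rwa [one_le_div haz]
  have h6 : |(k₁ᵀ * k₂) i q| ≤ a i * r / b q := by rwa [le_div_iff₀ hbq]
  exact h6.trans (le_mul_of_one_le_right (by positivity) h5)

theorem rate_unif {d : ℕ} (z : Fin d) (α : ℕ → Fin d → ℝ) (hpos : ∀ n i, 0 < α n i)
    (hcli : ∀ i : Fin d, i ≠ z → IsCLI fun n => Real.log (α n z) - Real.log (α n i)) :
    ∃ A ρ : ℝ, 0 ≤ A ∧ 0 ≤ ρ ∧ ρ < 1 ∧ ∀ l, l ≠ z → ∀ s m,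
      α (s + m) l / α (s + m) z ≤ A * ρ ^ m * (α s l / α s z) := by
  have h1 : ∀ i : Fin d, ∃ κ κ' : ℝ, 0 < κ ∧ (i ≠ z → ∀ n m : ℕ, κ * m - κ' ≤
      (Real.log (α (n + m) z) - Real.log (α (n + m) i)) -
        (Real.log (α n z) - Real.log (α n i))) := by
    intro i
    by_cases hi : i = z
    · exact ⟨1, 1, one_pos, fun h => absurd hi h⟩
    · obtain ⟨κ, κ', _, _, h, _, _, _, H⟩ := hcli i hi
      exact ⟨κ, κ', h, fun _ n m => (H n m).1⟩
  choose κ κ' hκ H using h1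
  have : Nonempty (Fin d) := ⟨z⟩
  obtain ⟨i0, hi0⟩ := Finite.exists_min κ
  obtain ⟨i1, hi1⟩ := Finite.exists_max κ'
  refine ⟨Real.exp (κ' i1), Real.exp (-κ i0), (Real.exp_pos _).le, (Real.exp_pos _).le,
    by simpa using hκ i0, ?_⟩
  intro l hl s m
  have h2 := H l hl s m
  have h3 := hi0 l
  have h4 := hi1 l
  have h5 : κ i0 * m ≤ κ l * m := by gcongr
  have e : ∀ n, α n l / α n z = Real.exp (Real.log (α n l) - Real.log (α n z)) := by
    intro n
    rw [Real.exp_sub, Real.exp_log (hpos _ _), Real.exp_log (hpos _ _)]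
  rw [e, e, ← Real.exp_nat_mul, ← Real.exp_add, ← Real.exp_add]
  apply Real.exp_le_exp.2
  linarith

theorem column_bd {d : ℕ} (z : Fin d) (hz : ∀ l, z ≤ l) (g : ℕ → Matrix (Fin d) (Fin d) ℝ)
    (hbd : HasBoundedSteps g)
    (k : ℕ → Matrix (Fin d) (Fin d) ℝ) (α : ℕ → Fin d → ℝ)
    (k' : ℕ → Matrix (Fin d) (Fin d) ℝ)
    (hsvd : ∀ n : ℕ, IsSVD (g n) (k n) (α n) (k' n))
    (A ρ : ℝ) (hA : 0 ≤ A) (h0 : 0 ≤ ρ) (h1 : ρ < 1)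
    (hrate : ∀ l, l ≠ z → ∀ s m, α (s + m) l / α (s + m) z ≤ A * ρ ^ m * (α s l / α s z)) :
    ∃ C : ℝ, 0 ≤ C ∧ ∀ n m i, i ≠ z →
      |((k n)ᵀ * k (n + m)) i z| ≤ C * (α n i / α n z) := by
  obtain ⟨r, hr, hst⟩ := hbd
  obtain ⟨C, hC, HC⟩ := scalar_bd z hz A ρ (d * (d * r ^ 2)) hA h0 h1 (by positivity)
  refine ⟨C, hC, fun n m i hi => ?_⟩
  have hor : ∀ n, k n * (k n)ᵀ = 1 := fun n => (hsvd n).1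
  have hor' : ∀ n, (k n)ᵀ * k n = 1 := fun n => mul_eq_one_comm.1 (hsvd n).1
  have hpos : ∀ n i, 0 < α n i := fun n => (hsvd n).2.2.1
  have hanti : ∀ n, Antitone (α n) := fun n => (hsvd n).2.2.2.1
  set X : ℕ → EuclideanSpace ℝ (Fin d) := fun s =>
    appE ((k (n + s))ᵀ * k n) (EuclideanSpace.single i 1) with hX
  have hXn : ∀ s, ‖X s‖ = 1 := by
    intro s
    simp only [hX]
    rw [appE_mul, norm_appE_orth _ (by simpa using hor (n + s)), norm_appE_orth _ (hor' n)]
    simp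
  have V : Valid z A ρ (d * (d * r ^ 2)) (fun s l => α (n + s) l / α (n + s) z)
      (fun s l => ‖trunc l (X s)‖) i := by
    refine ⟨fun s l => div_pos (hpos _ _) (hpos _ _), ?_, fun s => div_self (hpos _ _).ne', ?_,
      fun s l => norm_nonneg _, ?_, ?_, hi, ?_⟩
    · intro s a b hab
      exact div_le_div_of_nonneg_right (hanti _ hab) (hpos _ _).le
    · intro l hl s m
      have := hrate l hl (n + s) m
      rwa [add_assoc] at this
    · intro s l
      exact (norm_trunc_le _ _).trans (hXn s).le
    · intro l hl
      have : trunc l (X 0) = 0 := by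
        ext q
        simp only [trunc, hX, add_zero, hor', appE_single]
        by_cases hq : q ≤ l
        · simp [hq, Matrix.one_apply, (hq.trans_lt hl).ne]
        · simp [hq]
      simp [this]
    · intro s l
      have hXs : X (s + 1) = appE ((k (n + s))ᵀ * k (n + (s + 1)))ᵀ (X s) := by
        simp only [hX]
        rw [← appE_mul, Matrix.transpose_mul, Matrix.transpose_transpose]
        congr 1
        rw [Matrix.mul_assoc, ← Matrix.mul_assoc (k (n + s)), hor, Matrix.one_mul]
      have hO : ((k (n + s))ᵀ * k (n + (s + 1))) * ((k (n + s))ᵀ * k (n + (s + 1)))ᵀ = 1 := by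
        rw [Matrix.transpose_mul, Matrix.transpose_transpose, Matrix.mul_assoc,
          ← Matrix.mul_assoc (k (n + (s + 1))), hor, Matrix.one_mul, hor']
      have := trunc_step_s13 _ hO l (fun l' => d * r ^ 2 *
        ((α (n + s) l' / α (n + s) z) / (α (n + (s + 1)) l / α (n + (s + 1)) z))) (by
          intro l' hl' q hq
          refine (step_entry z hz (hsvd (n + s)) (hsvd (n + (s + 1))) r (hst (n + s)).1
            (hst (n + s)).2 l' q).trans ?_
          have p1 := hpos (n + s) l'
          have p2 := hpos (n + s) z
          have p3 := hpos (n + (s + 1)) l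
          have p4 := hpos (n + (s + 1)) z
          have p5 := hanti (n + (s + 1)) hq
          gcongr) (X s)
      rw [← hXs] at this
      refine this.trans (le_of_eq ?_)
      congr 1
      rw [mul_assoc (d:ℝ), Finset.mul_sum, Finset.mul_sum, Finset.mul_sum]
      exact Finset.sum_congr rfl fun _ _ => by ring
  have h2 := HC _ _ _ V m
  simp only [add_zero] at h2
  refine le_trans ?_ h2
  have h3 := PiLp.norm_apply_le (trunc z (X m)) z
  refine le_trans (le_of_eq ?_) h3
  simp only [trunc, le_refl, if_true, hX, appE_single, Real.norm_eq_abs]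
  rw [← Matrix.transpose_apply ((k n)ᵀ * k (n + m)), Matrix.transpose_mul, Matrix.transpose_transpose]

/-- Expansion estimate: under the CLI hypothesis on the top singular value gaps, the vectors
`(diag(α(n))⁻¹ · k(n)⁻¹ k(n+m) · diag(α(n)))·e₁` make an angle with `e₁` of sine uniformly
bounded away from `1`. -/
theorem stmt13 (d : ℕ) (hd : 2 ≤ d) (g : ℕ → Matrix (Fin d) (Fin d) ℝ)
    (hbd : HasBoundedSteps g)
    (k : ℕ → Matrix (Fin d) (Fin d) ℝ) (α : ℕ → Fin d → ℝ)
    (k' : ℕ → Matrix (Fin d) (Fin d) ℝ)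
    (hsvd : ∀ n : ℕ, IsSVD (g n) (k n) (α n) (k' n))
    (hcli : ∀ i : Fin d, i ≠ ⟨0, by omega⟩ →
      IsCLI fun n => Real.log (α n ⟨0, by omega⟩) - Real.log (α n i)) :
    ∃ δ : ℝ, 0 < δ ∧ δ ≤ 1 ∧ ∃ N : ℕ, ∀ n : ℕ, N ≤ n → ∀ m : ℕ,
      sinAngle
        (appE ((Matrix.diagonal (α n))⁻¹ * ((k n)⁻¹ * k (n + m)) * Matrix.diagonal (α n))
          (e1 (by omega)))
        (e1 (by omega)) ≤ 1 - δ := by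
  have hd0 : 0 < d := by omega
  set z : Fin d := ⟨0, hd0⟩ with hzdef
  have hz : ∀ l, z ≤ l := fun l => Fin.mk_le_of_le_val (Nat.zero_le _)
  have hpos : ∀ n i, 0 < α n i := fun n => (hsvd n).2.2.1
  have hanti : ∀ n, Antitone (α n) := fun n => (hsvd n).2.2.2.1
  obtain ⟨A, ρ, hA, h0, h1, hrate⟩ := rate_unif z α hpos hcli
  obtain ⟨C, hC, hcol⟩ := column_bd z hz g hbd k α k' hsvd A ρ hA h0 h1 hrate
  set K : ℝ := 1 + d * C ^ 2 with hK
  have hK1 : 1 ≤ K := by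
    have : 0 ≤ d * C ^ 2 := by positivity
    linarith
  have hlim : Filter.Tendsto (fun n : ℕ => d * (C * (A * ρ ^ n)) ^ 2) Filter.atTop (nhds 0) := by
    have := tendsto_pow_atTop_nhds_zero_of_lt_one h0 h1
    have := (((this.const_mul A).const_mul C).pow 2).const_mul (d:ℝ)
    simpa using this
  obtain ⟨N, hN⟩ := Filter.eventually_atTop.1 (hlim.eventually (gt_mem_nhds (show (0:ℝ) < 1/2 by norm_num)))
  refine ⟨1 / (4 * K), by positivity, ?_, N, fun n hn m => ?_⟩
  · rw [div_le_one (by positivity)]; linarith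
  have hinv : (k n)⁻¹ = (k n)ᵀ := Matrix.inv_eq_right_inv (hsvd n).1
  have hinvd : (Matrix.diagonal (α n))⁻¹ = Matrix.diagonal (fun i => (α n i)⁻¹) := by
    apply Matrix.inv_eq_right_inv
    rw [Matrix.diagonal_mul_diagonal, ← Matrix.diagonal_one]
    congr 1
    ext i
    exact mul_inv_cancel₀ (hpos n i).ne'
  rw [hinv, hinvd]
  set H := (k n)ᵀ * k (n + m) with hH
  set w := appE (Matrix.diagonal (fun i => (α n i)⁻¹) * H * Matrix.diagonal (α n)) (e1 hd0) with hw
  have hwi : ∀ i, w i = (α n i)⁻¹ * H i z * α n z := by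
    intro i
    rw [hw, e1, appE_single, Matrix.mul_diagonal, Matrix.diagonal_mul]
  have hwz : w z = H z z := by
    rw [hwi]
    have := (hpos n z).ne'
    field_simp
  have hcolnorm : ∑ i, H i z ^ 2 = 1 := by
    have : ‖appE H (EuclideanSpace.single z 1)‖ ^ 2 = 1 := by
      rw [hH, appE_mul, norm_appE_orth _ (by simpa using (hsvd n).1),
        norm_appE_orth _ (mul_eq_one_comm.1 (hsvd (n + m)).1)]
      simp
    rw [EuclideanSpace.real_norm_sq_eq] at this
    simpa only [appE_single] using this
  have hsplit : ∀ f : Fin d → ℝ, ∀ c : ℝ, 0 ≤ c → (∀ i, i ≠ z → f i ≤ c) → ∑ i, f i ≤ f z + d * c := by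
    intro f c hc hf
    rw [← Finset.add_sum_erase _ _ (Finset.mem_univ z)]
    gcongr
    calc _ ≤ ∑ i ∈ Finset.univ.erase z, c :=
          Finset.sum_le_sum fun i hi => hf i (Finset.ne_of_mem_erase hi)
      _ ≤ ∑ i : Fin d, c := Finset.sum_le_sum_of_subset_of_nonneg (Finset.erase_subset _ _)
          fun _ _ _ => hc
      _ = _ := by simp
  have hzz : 1 / 2 ≤ H z z ^ 2 := by
    have := hsplit (fun i => H i z ^ 2) ((C * (A * ρ ^ n)) ^ 2) (by positivity) (by
      intro i hi
      apply sq_le_sq'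
      all_goals
        have b1 := hcol n m i hi
        have b2 := hrate i hi 0 n
        rw [zero_add] at b2
        have b3 : α 0 i / α 0 z ≤ 1 := (div_le_one (hpos _ _)).2 (hanti 0 (hz i))
        have b4 : A * ρ ^ n * (α 0 i / α 0 z) ≤ A * ρ ^ n := mul_le_of_le_one_right (by positivity) b3
        have b5 : |H i z| ≤ C * (A * ρ ^ n) := b1.trans (by gcongr; exact b2.trans b4)
        have b6 := abs_le.1 b5
      · exact b6.1
      · exact b6.2)
    have h5 := hN n hn
    rw [hcolnorm] at this
    linarith
  have hle1 : H z z ^ 2 ≤ 1 := by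
    rw [← hcolnorm]
    exact Finset.single_le_sum (f := fun i => H i z ^ 2) (fun i _ => sq_nonneg _) (Finset.mem_univ z)
  have hwn : ‖w‖ ^ 2 ≤ K := by
    rw [EuclideanSpace.real_norm_sq_eq]
    have := hsplit (fun i => w i ^ 2) (C ^ 2) (by positivity) (by
      intro i hi
      have b1 := hcol n m i hi
      have b2 : |w i| ≤ C := by
        rw [hwi, abs_mul, abs_mul, abs_of_pos (hpos n z), abs_of_pos (inv_pos.2 (hpos n i))]
        have p1 := hpos n i
        have p2 := hpos n z
        calc _ ≤ (α n i)⁻¹ * (C * (α n i / α n z)) * α n z := by gcongr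
          _ = C := by field_simp
      exact sq_le_sq' (abs_le.1 b2).1 (abs_le.1 b2).2)
    refine this.trans ?_
    rw [hwz]
    linarith
  have hwpos : 0 < ‖w‖ := by
    rw [norm_pos_iff]
    intro h
    rw [← hwz, h] at hzz
    norm_num at hzz
  have hcos : Real.cos (InnerProductGeometry.angle w (e1 hd0)) = H z z / ‖w‖ := by
    rw [InnerProductGeometry.cos_angle]
    have : inner ℝ w (e1 hd0) = w z := by
      simp [e1, EuclideanSpace.inner_single_right, hzdef]
    rw [this, hwz]
    simp [e1]
  have hs := Real.sin_sq_add_cos_sq (InnerProductGeometry.angle w (e1 hd0))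
  rw [hcos, div_pow] at hs
  have hq : 1 / 2 / K ≤ H z z ^ 2 / ‖w‖ ^ 2 := by gcongr
  have hδ : 1 / (4 * K) ≤ 1 := by
    rw [div_le_one (by positivity)]; linarith
  have e2 : 1 / 2 / K = 2 * (1 / (4 * K)) := by field_simp; norm_num
  unfold sinAngle
  refine (abs_le_of_sq_le_sq' ?_ (by linarith)).2
  nlinarith [sq_nonneg (1 / (4 * K))]
end
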